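/- arXiv:2104.02779 — 2 statements merged into one kernel-verified Lean document; each statement's English description precedes it below -/
import Mathlib

section
/- Let p be a prime number, μ the Haar measure on ℚ_pˣ with μ(ℤ_pˣ) = 1, v the normalized p-adic valuation, |·|_p the normalized absolute value, and χ(t) = (-1)^{v(t)}. Let c, ζ, u₁, u₂ ∈ ℚ_pˣ with u₁·u₂ = ζ, and define Orb(ζ, φ'_c, s) := χ(u₁)·|u₁|_p^{-s} · ∫_{ℚ_pˣ} 1_{ℤ_p}(u₁·t⁻¹) · 1_{c·ℤ_p}(t·u₂) · |t|_p^{s} · χ(t) dμ(t) for s ∈ ℝ. Then Orb(ζ, φ'_c, 0) = 1 if v(c⁻¹·ζ) ≥ 0 and v(c⁻¹·ζ) is even, and Orb(ζ, φ'_c, 0) = 0 otherwise. -/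
open MeasureTheory

/-- The normalized non-archimedean local orbital integral (with transfer factor)
for the test function `φ'_c = 1_{ℤ_p × c·ℤ_p}` on `ℚ_p × ℚ_p`, defined using a Haar
measure `μ` on `ℚ_pˣ`.  Here `χ(t) = (-1)^{v(t)}` is the quadratic character of the
unramified quadratic extension of `ℚ_p`. -/
noncomputable def padicOrb (p : ℕ) [Fact p.Prime] [MeasurableSpace ℚ_[p]ˣ]
    (μ : Measure ℚ_[p]ˣ) (c u₁ u₂ : ℚ_[p]ˣ) (s : ℝ) : ℝ :=
  (-1 : ℝ) ^ ((u₁ : ℚ_[p]).valuation) * ‖(u₁ : ℚ_[p])‖ ^ (-s) *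
    ∫ t : ℚ_[p]ˣ,
      (Set.indicator {x : ℚ_[p] | ‖x‖ ≤ 1} (fun _ => (1 : ℝ)) ((u₁ : ℚ_[p]) * ((t : ℚ_[p]))⁻¹)) *
      (Set.indicator {y : ℚ_[p] | ‖y‖ ≤ ‖(c : ℚ_[p])‖} (fun _ => (1 : ℝ))
        ((t : ℚ_[p]) * (u₂ : ℚ_[p]))) *
      ‖(t : ℚ_[p])‖ ^ s * (-1 : ℝ) ^ ((t : ℚ_[p]).valuation) ∂μ

/-! The valuation pushes the Haar measure on `ℚ_pˣ` with `μ(ℤ_pˣ) = 1` forward to the counting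
measure on `ℤ`, and the integrand depends on `t` only through `v(t)`: it is supported on
`v(c) - v(u₂) ≤ v(t) ≤ v(u₁)`, where it equals `(-(p ^ s)) ^ (-v(t))`. The transfer factor is
`(-(p ^ s)) ^ v(u₁)`, so with `k = v(u₁) - v(t)` the orbital integral is the geometric sum of
`(-(p ^ s)) ^ k` over `0 ≤ k ≤ v(c⁻¹ζ)`. At `s = 0` it is an alternating sum of signs. -/

theorem measure_preimage_singleton_eq_measure_ker {G H : Type*} [Group G] [MeasurableSpace G]
    [MeasurableMul G] [Group H] (μ : Measure G) [μ.IsMulLeftInvariant] (f : G →* H) (g : G) :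
    μ (f ⁻¹' {f g}) = μ f.ker := by
  rw [← measure_preimage_mul μ g]
  congr 1
  ext x
  simp [MonoidHom.mem_ker]

theorem sum_Icc_eq_sum_range_sub {M : Type*} [AddCommMonoid M] (f : ℤ → M) (a b : ℤ) :
    ∑ n ∈ Finset.Icc a b, f n = ∑ k ∈ Finset.range (b - a + 1).toNat, f (b - k) := by
  refine Finset.sum_nbij' (fun n ↦ (b - n).toNat) (fun k ↦ b - k) ?_ ?_ ?_ ?_ ?_ <;> grind

theorem setIntegral_finset_count {α E : Type*} [MeasurableSpace α] [MeasurableSingletonClass α]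
    [NormedAddCommGroup E] [NormedSpace ℝ E] [CompleteSpace E] (S : Finset α) (f : α → E) :
    ∫ a in S, f a ∂Measure.count = ∑ a ∈ S, f a := by
  have f_integrable : IntegrableOn f S Measure.count := by
    rw [← (S : Set α).biUnion_of_singleton]
    simp [integrableOn_finset_iUnion]
  simp [setIntegral_finset S f_integrable]

section Valuation

variable {p : ℕ} [Fact p.Prime]

theorem padic_valuation_units_mul (t u : ℚ_[p]ˣ) :
    ((t * u : ℚ_[p]ˣ) : ℚ_[p]).valuation = (t : ℚ_[p]).valuation + (u : ℚ_[p]).valuation :=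
  Padic.valuation_mul t.ne_zero u.ne_zero

theorem padic_norm_le_norm_iff_valuation_le {x y : ℚ_[p]} (hx : x ≠ 0) (hy : y ≠ 0) :
    ‖x‖ ≤ ‖y‖ ↔ y.valuation ≤ x.valuation := by
  have one_lt_p : (1 : ℝ) < p := mod_cast (Fact.out : p.Prime).one_lt
  rw [Padic.norm_eq_zpow_neg_valuation hx, Padic.norm_eq_zpow_neg_valuation hy,
    zpow_le_zpow_iff_right₀ one_lt_p, neg_le_neg_iff]

theorem padic_norm_eq_norm_iff_valuation_eq {x y : ℚ_[p]} (hx : x ≠ 0) (hy : y ≠ 0) :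
    ‖x‖ = ‖y‖ ↔ x.valuation = y.valuation := by
  rw [le_antisymm_iff, padic_norm_le_norm_iff_valuation_le hx hy,
    padic_norm_le_norm_iff_valuation_le hy hx, ← le_antisymm_iff, eq_comm]

theorem padic_norm_rpow_mul_neg_one_zpow_valuation {x : ℚ_[p]} (hx : x ≠ 0) (s : ℝ) :
    ‖x‖ ^ s * (-1 : ℝ) ^ x.valuation = (-(p : ℝ) ^ s) ^ (-x.valuation) := by
  have p_nonneg : (0 : ℝ) ≤ p := p.cast_nonneg
  have norm_rpow : ‖x‖ ^ s = ((p : ℝ) ^ s) ^ (-x.valuation) := by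
    rw [Padic.norm_eq_zpow_neg_valuation hx, ← Real.rpow_intCast_mul p_nonneg, mul_comm,
      Real.rpow_mul_intCast p_nonneg]
  rw [norm_rpow, neg_eq_neg_one_mul ((p : ℝ) ^ s), mul_zpow, zpow_neg (-1 : ℝ), ← inv_zpow,
    inv_neg_one, mul_comm]

theorem valuation_mem_Icc_iff_norm_le (c u₁ u₂ t : ℚ_[p]ˣ) :
    (t : ℚ_[p]).valuation ∈
        Finset.Icc ((c : ℚ_[p]).valuation - (u₂ : ℚ_[p]).valuation) (u₁ : ℚ_[p]).valuation ↔
      ‖(u₁ : ℚ_[p]) * (t : ℚ_[p])⁻¹‖ ≤ 1 ∧ ‖(t : ℚ_[p]) * (u₂ : ℚ_[p])‖ ≤ ‖(c : ℚ_[p])‖ := by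
  rw [← Units.val_mul t, padic_norm_le_norm_iff_valuation_le (t * u₂).ne_zero c.ne_zero,
    padic_valuation_units_mul, norm_mul, norm_inv, ← div_eq_mul_inv,
    div_le_one₀ (norm_pos_iff.2 t.ne_zero),
    padic_norm_le_norm_iff_valuation_le u₁.ne_zero t.ne_zero, Finset.mem_Icc, sub_le_iff_le_add,
    and_comm]

variable (p) in
/-- The valuation on `ℚ_pˣ` as a group homomorphism, with `ℤ` written multiplicatively. -/
noncomputable def padicUnitsValuation : ℚ_[p]ˣ →* Multiplicative ℤ :=
  MonoidHom.mk' (fun t ↦ .ofAdd (t : ℚ_[p]).valuation) fun t u ↦ by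
    rw [padic_valuation_units_mul, ofAdd_add]

theorem padicUnitsValuation_surjective : Function.Surjective (padicUnitsValuation p) := by
  have p_ne_zero : (p : ℚ_[p]) ≠ 0 := mod_cast (Fact.out : p.Prime).ne_zero
  intro n
  refine ⟨Units.mk0 (p : ℚ_[p]) p_ne_zero ^ n.toAdd, ?_⟩
  simp [padicUnitsValuation]

theorem mem_ker_padicUnitsValuation {t : ℚ_[p]ˣ} :
    t ∈ (padicUnitsValuation p).ker ↔ ‖(t : ℚ_[p])‖ = 1 := by
  rw [← norm_one (α := ℚ_[p]), padic_norm_eq_norm_iff_valuation_eq t.ne_zero one_ne_zero,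
    Padic.valuation_one, MonoidHom.mem_ker]
  exact ofAdd_eq_one

theorem continuous_padic_valuation_units :
    Continuous fun t : ℚ_[p]ˣ ↦ (t : ℚ_[p]).valuation := by
  refine continuous_discrete_rng.2 fun n ↦ isOpen_iff_mem_nhds.2 fun t ht ↦ ?_
  have sphere_open : IsOpen (Metric.sphere (0 : ℚ_[p]) ‖(t : ℚ_[p])‖) :=
    IsUltrametricDist.isOpen_sphere 0 (norm_ne_zero_iff.2 t.ne_zero)
  filter_upwards [(sphere_open.preimage Units.continuous_val).mem_nhds (by simp)] with u hu
  rw [Set.mem_preimage, mem_sphere_zero_iff_norm,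
    padic_norm_eq_norm_iff_valuation_eq u.ne_zero t.ne_zero] at hu
  exact hu.trans ht

end Valuation

section HaarMeasure

variable {p : ℕ} [Fact p.Prime] [MeasurableSpace ℚ_[p]ˣ] [BorelSpace ℚ_[p]ˣ]
  {μ : Measure ℚ_[p]ˣ} [μ.IsMulLeftInvariant]

theorem map_padic_valuation_eq_count (hμ : μ {t : ℚ_[p]ˣ | ‖(t : ℚ_[p])‖ = 1} = 1) :
    μ.map (fun t : ℚ_[p]ˣ ↦ (t : ℚ_[p]).valuation) = Measure.count := by
  refine Measure.ext_of_singleton fun n ↦ ?_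
  obtain ⟨g, hg⟩ := padicUnitsValuation_surjective (p := p) (.ofAdd n)
  have ker_eq : ((padicUnitsValuation p).ker : Set ℚ_[p]ˣ) =
      {t : ℚ_[p]ˣ | ‖(t : ℚ_[p])‖ = 1} :=
    Set.ext fun _ ↦ mem_ker_padicUnitsValuation
  calc μ.map (fun t : ℚ_[p]ˣ ↦ (t : ℚ_[p]).valuation) {n}
    _ = μ (padicUnitsValuation p ⁻¹' {padicUnitsValuation p g}) := by
      rw [Measure.map_apply continuous_padic_valuation_units.measurable (measurableSet_singleton n),
        hg]
      rfl
    _ = 1 := by rw [measure_preimage_singleton_eq_measure_ker, ker_eq, hμ]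
    _ = Measure.count {n} := (Measure.count_singleton n).symm

theorem integral_indicator_finset_padic_valuation
    (hμ : μ {t : ℚ_[p]ˣ | ‖(t : ℚ_[p])‖ = 1} = 1)
    {E : Type*} [NormedAddCommGroup E] [NormedSpace ℝ E] [CompleteSpace E]
    (S : Finset ℤ) (f : ℤ → E) :
    ∫ t : ℚ_[p]ˣ, (S : Set ℤ).indicator f (t : ℚ_[p]).valuation ∂μ = ∑ n ∈ S, f n := by
  calc ∫ t : ℚ_[p]ˣ, (S : Set ℤ).indicator f (t : ℚ_[p]).valuation ∂μ
    _ = ∫ n, (S : Set ℤ).indicator f n ∂Measure.count := by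
      rw [← map_padic_valuation_eq_count hμ,
        integral_map continuous_padic_valuation_units.aemeasurable
          StronglyMeasurable.of_discrete.aestronglyMeasurable]
    _ = ∑ n ∈ S, f n := by
      rw [integral_indicator S.measurableSet, setIntegral_finset_count]

end HaarMeasure

section OrbitalIntegral

variable {p : ℕ} [Fact p.Prime] [MeasurableSpace ℚ_[p]ˣ] {μ : Measure ℚ_[p]ˣ}

theorem padicOrb_eq_zpow_mul_integral_indicator (c u₁ u₂ : ℚ_[p]ˣ) (s : ℝ) :
    padicOrb p μ c u₁ u₂ s = (-(p : ℝ) ^ s) ^ (u₁ : ℚ_[p]).valuation *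
      ∫ t : ℚ_[p]ˣ, (Finset.Icc ((c : ℚ_[p]).valuation - (u₂ : ℚ_[p]).valuation)
        (u₁ : ℚ_[p]).valuation : Set ℤ).indicator (fun n ↦ (-(p : ℝ) ^ s) ^ (-n))
          (t : ℚ_[p]).valuation ∂μ := by
  have transfer_factor : (-1 : ℝ) ^ (u₁ : ℚ_[p]).valuation * ‖(u₁ : ℚ_[p])‖ ^ (-s) =
      (-(p : ℝ) ^ s) ^ (u₁ : ℚ_[p]).valuation := by
    rw [mul_comm, padic_norm_rpow_mul_neg_one_zpow_valuation u₁.ne_zero,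
      Real.rpow_neg p.cast_nonneg, ← inv_neg, inv_zpow', neg_neg]
  rw [padicOrb, transfer_factor]
  congr 2 with t
  rw [mul_assoc, padic_norm_rpow_mul_neg_one_zpow_valuation t.ne_zero]
  have support_iff := valuation_mem_Icc_iff_norm_le c u₁ u₂ t
  simp only [Set.indicator_apply, Set.mem_ofPred_eq, support_iff, Finset.mem_coe, ite_and]
  split_ifs <;> simp

theorem padicOrb_eq_geom_sum [BorelSpace ℚ_[p]ˣ] [μ.IsMulLeftInvariant]
    (hμ : μ {t : ℚ_[p]ˣ | ‖(t : ℚ_[p])‖ = 1} = 1) (c u₁ u₂ : ℚ_[p]ˣ) (s : ℝ) :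
    padicOrb p μ c u₁ u₂ s =
      ∑ k ∈ Finset.range (((c⁻¹ * (u₁ * u₂) : ℚ_[p]ˣ) : ℚ_[p]).valuation + 1).toNat,
        (-(p : ℝ) ^ s) ^ k := by
  have p_pos : (0 : ℝ) < p := mod_cast (Fact.out : p.Prime).pos
  have base_ne_zero : -(p : ℝ) ^ s ≠ 0 := neg_ne_zero.2 (Real.rpow_pos_of_pos p_pos s).ne'
  have length_eq : (u₁ : ℚ_[p]).valuation - ((c : ℚ_[p]).valuation - (u₂ : ℚ_[p]).valuation) =
      ((c⁻¹ * (u₁ * u₂) : ℚ_[p]ˣ) : ℚ_[p]).valuation := by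
    rw [padic_valuation_units_mul, padic_valuation_units_mul, Units.val_inv_eq_inv_val,
      Padic.valuation_inv]
    ring
  rw [padicOrb_eq_zpow_mul_integral_indicator, integral_indicator_finset_padic_valuation hμ,
    sum_Icc_eq_sum_range_sub, length_eq, Finset.mul_sum]
  refine Finset.sum_congr rfl fun k _ ↦ ?_
  rw [← zpow_add₀ base_ne_zero, ← zpow_natCast]
  congr 1
  ring

end OrbitalIntegral

/-- The value at `s = 0` of the normalized local orbital integral for
`φ'_c = 1_{ℤ_p × c·ℤ_p}`: it is `1` if `v(c⁻¹ζ) ≥ 0` is even, and `0` otherwise. -/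
theorem stmt2 (p : ℕ) [Fact p.Prime]
    [MeasurableSpace ℚ_[p]ˣ] [BorelSpace ℚ_[p]ˣ]
    (μ : Measure ℚ_[p]ˣ) [μ.IsHaarMeasure]
    (hμ : μ {t : ℚ_[p]ˣ | ‖(t : ℚ_[p])‖ = 1} = 1)
    (c ζ u₁ u₂ : ℚ_[p]ˣ) (hu : u₁ * u₂ = ζ) :
    (0 ≤ ((c⁻¹ * ζ : ℚ_[p]ˣ) : ℚ_[p]).valuation ∧
        Even ((c⁻¹ * ζ : ℚ_[p]ˣ) : ℚ_[p]).valuation →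
      padicOrb p μ c u₁ u₂ 0 = 1) ∧
    (¬(0 ≤ ((c⁻¹ * ζ : ℚ_[p]ˣ) : ℚ_[p]).valuation ∧
        Even ((c⁻¹ * ζ : ℚ_[p]ˣ) : ℚ_[p]).valuation) →
      padicOrb p μ c u₁ u₂ 0 = 0) := by
  subst hu
  rw [padicOrb_eq_geom_sum hμ, Real.rpow_zero, neg_one_geom_sum]
  generalize ((c⁻¹ * (u₁ * u₂) : ℚ_[p]ˣ) : ℚ_[p]).valuation = m
  have even_toNat_iff : Even (m + 1).toNat ↔ ¬(0 ≤ m ∧ Even m) := by grind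
  simp only [even_toNat_iff]
  exact ⟨fun h ↦ if_neg (not_not_intro h), fun h ↦ if_pos h⟩
end

section
/- Define φ' : ℝ × ℝ → ℝ by φ'(x, y) = ((x + y)/2)·e^{-π(x² + y²)}, and for r > 0 set Ei(-r) := -∫_r^∞ e^{-t}/t dt. Let ζ < 0 and choose u₁, u₂ ∈ ℝ, both nonzero, with u₁·u₂ = ζ. For s ∈ ℝ define Orb(ζ, φ', s) := sgn(u₁)·|u₁|^{-s} · ∫_{ℝ∖{0}} φ'(u₁·t⁻¹, t·u₂) · |t|^{s-1} · sgn(t) dt (Lebesgue measure). Then s ↦ Orb(ζ, φ', s) is differentiable at s = 0 with derivative ∂Orb(ζ, φ') = (1/2)·e^{-2πζ}·Ei(-4π|ζ|). -/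
open MeasureTheory

/-- The archimedean Gaussian test function `φ'(x,y) = ((x+y)/2)·e^{-π(x²+y²)}`
on the split quadratic space `ℝ × ℝ`. -/
noncomputable def gaussianTestFn (x y : ℝ) : ℝ :=
  ((x + y) / 2) * Real.exp (-(Real.pi * (x ^ 2 + y ^ 2)))

/-- The normalized archimedean local orbital integral (with transfer factor
`sgn(u₁)·|u₁|^{-s}`), evaluated at the identity of `SL₂(ℝ)`. -/
noncomputable def archOrb (u₁ u₂ s : ℝ) : ℝ :=
  Real.sign u₁ * |u₁| ^ (-s) *
    ∫ t in ({0}ᶜ : Set ℝ),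
      gaussianTestFn (u₁ * t⁻¹) (t * u₂) * |t| ^ (s - 1) * Real.sign t

/-- The exponential integral `Ei(-r) = -∫_r^∞ e^{-t}/t dt` (for `r > 0`). -/
noncomputable def eiNeg (r : ℝ) : ℝ := -(∫ t in Set.Ioi r, Real.exp (-t) / t)

open Real Set Filter Topology

/-!
Put `ζ = -p²`. As `φ'` is odd, we may assume `u₁ > 0`, and the integrand is even in `t`. On `t > 0`
substitute `t = (u₁ / p) eˣ`; with `c = 4πp²`, the orbital integral becomes a constant times
`p⁻ˢ ∫ eˢˣ sinh x exp (-c cosh² x) dx`. The factor `sinh x exp (-c cosh² x)` is the derivative of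
`-T (cosh x)`, where `T y = ∫_y^∞ exp (-c w²) dw`, so integrating by parts pulls out a factor `s`.
The remaining cofactor is continuous in `s`, hence the derivative at `s = 0` is its value there, a
multiple of `∫ T (cosh x) dx`. Writing `T y = ∫_1^∞ y exp (-c r² y²) dr` and integrating over `x`
first, by the substitution `y = sinh x`, leaves the exponential integral
`∫_1^∞ exp (-c r²) / r dr`.
-/

section RealIntegral

variable {E : Type*} [NormedAddCommGroup E] [NormedSpace ℝ E]

theorem integral_comp_exp (f : ℝ → E) :
    ∫ x, exp x • f (exp x) = ∫ t in Ioi 0, f t := by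
  have h := integral_image_eq_integral_deriv_smul_of_monotoneOn MeasurableSet.univ
    (fun x _ => (hasDerivAt_exp x).hasDerivWithinAt) (exp_monotone.monotoneOn univ) f
  rw [image_univ, range_exp, setIntegral_univ] at h
  exact h.symm

theorem integral_comp_sinh (f : ℝ → E) :
    ∫ x, cosh x • f (sinh x) = ∫ y, f y := by
  have h := integral_image_eq_integral_deriv_smul_of_monotoneOn MeasurableSet.univ
    (fun x _ => (hasDerivAt_sinh x).hasDerivWithinAt) (sinh_strictMono.monotone.monotoneOn univ) f
  rw [image_univ, sinh_surjective.range_eq, setIntegral_univ, setIntegral_univ] at h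
  exact h.symm

theorem integral_Ioi_zero_rpow_sub_one_smul (f : ℝ → E) (s : ℝ) {r : ℝ} (hr : 0 < r) :
    ∫ t in Ioi 0, t ^ (s - 1) • f t = r ^ s • ∫ x, exp (s * x) • f (r * exp x) := by
  have hscale := integral_comp_mul_left_Ioi' (fun t => t ^ (s - 1) • f t) 0 hr
  rw [mul_zero, ← integral_comp_exp, ← integral_smul] at hscale
  rw [← hscale, ← integral_smul]
  congr 1 with x
  have hpow : r * (exp x * (r * exp x) ^ (s - 1)) = r ^ s * exp (s * x) := by
    rw [mul_rpow hr.le (exp_pos x).le, rpow_sub_one hr.ne', ← exp_mul, mul_sub_one, exp_sub,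
      mul_comm x]
    field_simp
  simp only [smul_smul, hpow]

theorem continuous_integral_exp_mul_smul {f : ℝ → E}
    (hf : ∀ s, Integrable fun x => exp (s * x) • f x) :
    Continuous fun s => ∫ x, exp (s * x) • f x := by
  refine continuous_iff_continuousAt.2 fun s₀ => continuousAt_of_dominated
    (.of_forall fun s => (hf s).aestronglyMeasurable) ?_
    ((hf (s₀ + 1)).norm.add (hf (s₀ - 1)).norm) (.of_forall fun x => by fun_prop)
  filter_upwards [Metric.ball_mem_nhds s₀ one_pos] with s hs
  refine .of_forall fun x => ?_
  have hsx : |(s - s₀) * x| ≤ |x| := by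
    rw [abs_mul]
    exact mul_le_of_le_one_left (abs_nonneg x) (le_of_lt hs)
  have hexp : exp (s * x) ≤ exp ((s₀ + 1) * x) + exp ((s₀ - 1) * x) := calc
    exp (s * x) = exp (s₀ * x) * exp ((s - s₀) * x) := by rw [← exp_add]; ring_nf
    _ ≤ exp (s₀ * x) * (exp x + exp (-x)) := by
      gcongr
      exact (exp_le_exp.2 ((le_abs_self _).trans hsx)).trans (exp_abs_le x)
    _ = exp ((s₀ + 1) * x) + exp ((s₀ - 1) * x) := by
      rw [mul_add, ← exp_add, ← exp_add]; ring_nf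
  simp only [Pi.add_apply, norm_smul, norm_of_nonneg (exp_pos _).le, ← add_mul]
  gcongr

end RealIntegral

theorem hasDerivAt_sub_smul_of_continuousAt {𝕜 E : Type*} [NontriviallyNormedField 𝕜]
    [NormedAddCommGroup E] [NormedSpace 𝕜 E] {f : 𝕜 → E} {a : 𝕜} (hf : ContinuousAt f a) :
    HasDerivAt (fun x => (x - a) • f x) (f a) a := by
  refine hasDerivAt_iff_tendsto_slope.2 ((hf.tendsto.mono_left nhdsWithin_le_nhds).congr' ?_)
  filter_upwards [self_mem_nhdsWithin] with x hx
  rw [slope_def_module, sub_self, zero_smul, sub_zero, inv_smul_smul₀ (sub_ne_zero.2 hx)]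

theorem integral_compl_singleton_zero_mul_sign_of_odd {f : ℝ → ℝ} (hf : f.Odd) :
    ∫ t in {0}ᶜ, f t * sign t = 2 * ∫ t in Ioi 0, f t := by
  rw [restrict_compl_singleton, ← integral_comp_abs]
  congr 1 with t
  rcases lt_trichotomy t 0 with ht | rfl | ht
  · rw [sign_of_neg ht, abs_of_neg ht, hf, mul_neg_one]
  · simp [hf.map_zero]
  · rw [sign_of_pos ht, abs_of_pos ht, mul_one]

section GaussianTail

/-- The tail `∫_y^∞ exp (-c w²) dw` of a Gaussian integral, a primitive of `-exp (-c y²)` in `y`. -/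
noncomputable def gaussianTail (c y : ℝ) : ℝ := ∫ w in Ioi y, exp (-c * w ^ 2)

theorem gaussianTail_nonneg (c y : ℝ) : 0 ≤ gaussianTail c y :=
  integral_nonneg fun _ => (exp_pos _).le

theorem gaussianTail_eq_integral_Ioi_one (c : ℝ) {y : ℝ} (hy : 0 < y) :
    gaussianTail c y = ∫ r in Ioi (1 : ℝ), y * exp (-(c * r ^ 2) * y ^ 2) := by
  have h := integral_comp_mul_left_Ioi' (fun w => exp (-c * w ^ 2)) 1 hy
  rw [mul_one, smul_eq_mul, ← integral_const_mul] at h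
  rw [gaussianTail, ← h]
  congr 1 with r
  ring_nf

variable {c : ℝ}

theorem hasDerivAt_gaussianTail (hc : 0 < c) (y : ℝ) :
    HasDerivAt (gaussianTail c) (-exp (-c * y ^ 2)) y := by
  have hint := integrable_exp_neg_mul_sq hc
  have hcont : Continuous fun w : ℝ => exp (-c * w ^ 2) := by fun_prop
  refine ((hcont.integral_hasStrictDerivAt 0 y).hasDerivAt.const_sub
    (gaussianTail c 0)).congr_of_eventuallyEq (.of_forall fun z => ?_)
  exact eq_sub_of_add_eq' (intervalIntegral.integral_interval_add_Ioi hint.integrableOn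
    hint.integrableOn)

theorem continuous_gaussianTail (hc : 0 < c) : Continuous (gaussianTail c) :=
  continuous_iff_continuousAt.2 fun y => (hasDerivAt_gaussianTail hc y).continuousAt

theorem integral_Ioi_mul_exp_neg_mul_sq (hc : 0 < c) (y : ℝ) :
    ∫ w in Ioi y, w * exp (-c * w ^ 2) = exp (-c * y ^ 2) / (2 * c) := by
  have hderiv (w : ℝ) :
      HasDerivAt (fun w => -(exp (-c * w ^ 2) / (2 * c))) (w * exp (-c * w ^ 2)) w := by
    refine (((hasDerivAt_pow 2 w).const_mul (-c)).exp.div_const (2 * c)).neg.congr_deriv ?_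
    push_cast
    field_simp
  have hlim : Tendsto (fun w => -(exp (-c * w ^ 2) / (2 * c))) atTop (𝓝 0) := by
    have h : Tendsto (fun w : ℝ => -c * w ^ 2) atTop atBot :=
      (tendsto_pow_atTop two_ne_zero).const_mul_atTop_of_neg (neg_lt_zero.2 hc)
    simpa using ((tendsto_exp_atBot.comp h).div_const (2 * c)).neg
  rw [integral_Ioi_of_hasDerivAt_of_tendsto' (fun w _ => hderiv w)
    (integrable_mul_exp_neg_mul_sq hc).integrableOn hlim, zero_sub, neg_neg]

theorem gaussianTail_le (hc : 0 < c) {y : ℝ} (hy : 1 ≤ y) :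
    gaussianTail c y ≤ exp (-c * y ^ 2) / (2 * c) := by
  rw [← integral_Ioi_mul_exp_neg_mul_sq hc]
  refine setIntegral_mono_on (integrable_exp_neg_mul_sq hc).integrableOn
    (integrable_mul_exp_neg_mul_sq hc).integrableOn measurableSet_Ioi fun w hw => ?_
  exact le_mul_of_one_le_left (exp_pos _).le (hy.trans (le_of_lt hw))

end GaussianTail

section HyperbolicGaussian

variable {c : ℝ}

theorem integrable_exp_mul_mul_exp_neg_mul_sq (hc : 0 < c) (s : ℝ) :
    Integrable fun x => exp (s * x) * exp (-c * x ^ 2) := by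
  have h := (integrable_cexp_quadratic (b := c) (by simpa) s 0).norm
  refine h.congr (.of_forall fun x => ?_)
  simp only [← Complex.ofReal_pow, Complex.norm_exp, neg_mul, add_zero, Complex.add_re,
    Complex.neg_re, Complex.mul_re, Complex.ofReal_re, Complex.ofReal_im, mul_zero, sub_zero,
    ← exp_add]
  ring_nf

theorem sq_le_cosh_sq (x : ℝ) : x ^ 2 ≤ cosh x ^ 2 := calc
  x ^ 2 ≤ sinh x ^ 2 := sq_le_sq.2 (abs_sinh x ▸ self_le_sinh_iff.2 (abs_nonneg x))
  _ ≤ cosh x ^ 2 := (sinh_sq x).trans_le (sub_le_self _ zero_le_one)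

theorem integrable_exp_mul_mul_exp_neg_mul_cosh_sq (hc : 0 < c) (s : ℝ) :
    Integrable fun x => exp (s * x) * exp (-c * cosh x ^ 2) := by
  refine (integrable_exp_mul_mul_exp_neg_mul_sq hc s).mono'
    (by fun_prop : Continuous _).aestronglyMeasurable (.of_forall fun x => ?_)
  rw [norm_of_nonneg (by positivity)]
  gcongr _ * exp ?_
  exact mul_le_mul_of_nonpos_left (sq_le_cosh_sq x) (neg_nonpos.2 hc.le)

theorem integrable_cosh_mul_exp_neg_mul_cosh_sq (hc : 0 < c) :
    Integrable fun x => cosh x * exp (-c * cosh x ^ 2) := by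
  refine (((integrable_exp_mul_mul_exp_neg_mul_cosh_sq hc 1).add
    (integrable_exp_mul_mul_exp_neg_mul_cosh_sq hc (-1))).div_const 2).congr
    (.of_forall fun x => ?_)
  simp only [Pi.add_apply, cosh_eq x]
  ring_nf

theorem integrable_exp_mul_mul_sinh_mul_exp_neg_mul_cosh_sq (hc : 0 < c) (s : ℝ) :
    Integrable fun x => exp (s * x) * (sinh x * exp (-c * cosh x ^ 2)) := by
  refine (((integrable_exp_mul_mul_exp_neg_mul_cosh_sq hc (s + 1)).sub
    (integrable_exp_mul_mul_exp_neg_mul_cosh_sq hc (s - 1))).div_const 2).congr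
    (.of_forall fun x => ?_)
  simp only [Pi.sub_apply, sinh_eq, add_mul, sub_mul, one_mul, exp_add, exp_sub, exp_neg]
  ring

theorem integrable_exp_mul_mul_gaussianTail_cosh (hc : 0 < c) (s : ℝ) :
    Integrable fun x => exp (s * x) * gaussianTail c (cosh x) := by
  have hcont := continuous_gaussianTail hc
  refine ((integrable_exp_mul_mul_exp_neg_mul_cosh_sq hc s).div_const (2 * c)).mono'
    (by fun_prop : Continuous _).aestronglyMeasurable (.of_forall fun x => ?_)
  rw [norm_of_nonneg (mul_nonneg (exp_pos _).le (gaussianTail_nonneg _ _)), mul_div_assoc]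
  gcongr
  exact gaussianTail_le hc (one_le_cosh x)

theorem integral_exp_mul_mul_sinh_mul_exp_neg_mul_cosh_sq (hc : 0 < c) (s : ℝ) :
    ∫ x, exp (s * x) * (sinh x * exp (-c * cosh x ^ 2)) =
      s * ∫ x, exp (s * x) * gaussianTail c (cosh x) := by
  have hexp (x : ℝ) : HasDerivAt (fun x => exp (s * x)) (s * exp (s * x)) x := by
    simpa [mul_comm] using ((hasDerivAt_id x).const_mul s).exp
  have htail (x : ℝ) : HasDerivAt (fun x => gaussianTail c (cosh x))
      (-(sinh x * exp (-c * cosh x ^ 2))) x :=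
    ((hasDerivAt_gaussianTail hc _).comp x (hasDerivAt_cosh x)).congr_deriv (by ring)
  have hparts := integral_mul_deriv_eq_deriv_mul_of_integrable (fun x _ => hexp x)
    (fun x _ => htail x)
    (by simpa [Pi.mul_def] using (integrable_exp_mul_mul_sinh_mul_exp_neg_mul_cosh_sq hc s).neg)
    (by simpa [Pi.mul_def, mul_assoc]
      using (integrable_exp_mul_mul_gaussianTail_cosh hc s).const_mul s)
    (integrable_exp_mul_mul_gaussianTail_cosh hc s)
  simpa only [mul_neg, integral_neg, neg_inj, mul_assoc, integral_const_mul] using hparts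

theorem integral_cosh_mul_exp_neg_mul_cosh_sq (c : ℝ) :
    ∫ x, cosh x * exp (-c * cosh x ^ 2) = exp (-c) * √(π / c) := by
  rw [← integral_gaussian, ← integral_const_mul,
    ← integral_comp_sinh fun y => exp (-c) * exp (-c * y ^ 2)]
  simp only [smul_eq_mul, ← exp_add, cosh_sq', mul_add, mul_one]

theorem integral_cosh_mul_exp_neg_mul_sq_mul_cosh_sq (c : ℝ) {r : ℝ} (hr : 0 < r) :
    ∫ x, cosh x * exp (-(c * r ^ 2) * cosh x ^ 2) = √(π / c) * (exp (-c * r ^ 2) / r) := by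
  rw [integral_cosh_mul_exp_neg_mul_cosh_sq, ← div_div, sqrt_div' _ (sq_nonneg r), sqrt_sq hr.le,
    neg_mul]
  ring

theorem integral_Ioi_one_exp_neg_mul_sq_div (hc : 0 < c) :
    ∫ r in Ioi (1 : ℝ), exp (-c * r ^ 2) / r = -eiNeg c / 2 := by
  have hsq := integral_comp_rpow_Ioi_of_pos' (g := fun x => exp (-(c * x)) / x) two_pos zero_le_one
  have hscale := integral_comp_mul_left_Ioi' (fun t => exp (-t) / t) 1 hc
  rw [one_rpow] at hsq
  rw [mul_one, smul_eq_mul] at hscale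
  rw [eiNeg, neg_neg, ← hscale, ← integral_const_mul, eq_div_iff two_ne_zero, ← integral_mul_const]
  calc ∫ r in Ioi 1, exp (-c * r ^ 2) / r * 2
    _ = ∫ r in Ioi 1, (2 * r ^ ((2 : ℝ) - 1)) • (exp (-(c * r ^ (2 : ℝ))) / r ^ (2 : ℝ)) := by
      refine setIntegral_congr_fun measurableSet_Ioi fun r hr => ?_
      have hr : 0 < r := one_pos.trans hr
      simp only [show (2 : ℝ) - 1 = 1 by norm_num, rpow_one, rpow_two, neg_mul, smul_eq_mul]
      field_simp
    _ = ∫ t in Ioi 1, exp (-(c * t)) / t := hsq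
    _ = ∫ t in Ioi 1, c * (exp (-(c * t)) / (c * t)) := by
      congr 1 with t
      field_simp

theorem integrableOn_Ioi_one_exp_neg_mul_sq_div (hc : 0 < c) :
    IntegrableOn (fun r => exp (-c * r ^ 2) / r) (Ioi 1) := by
  refine (integrable_exp_neg_mul_sq hc).integrableOn.mono'
    (by fun_prop : Measurable _).aestronglyMeasurable ?_
  filter_upwards [ae_restrict_mem measurableSet_Ioi] with r hr
  have hr : 1 ≤ r := le_of_lt hr
  rw [norm_of_nonneg (by positivity)]
  exact div_le_self (exp_pos _).le hr

theorem integrable_prod_cosh_mul_exp_neg_mul_cosh_sq (hc : 0 < c) :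
    Integrable (Function.uncurry fun x r : ℝ => cosh x * exp (-(c * r ^ 2) * cosh x ^ 2))
      (volume.prod (volume.restrict (Ioi 1))) := by
  have hcont : Continuous
      (Function.uncurry fun x r : ℝ => cosh x * exp (-(c * r ^ 2) * cosh x ^ 2)) := by
    unfold Function.uncurry
    fun_prop
  refine (integrable_prod_iff' hcont.aestronglyMeasurable).2 ⟨?_, ?_⟩
  · filter_upwards [ae_restrict_mem measurableSet_Ioi] with r hr
    have hr : 0 < r := one_pos.trans hr
    exact integrable_cosh_mul_exp_neg_mul_cosh_sq (c := c * r ^ 2) (by positivity)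
  · refine ((integrableOn_Ioi_one_exp_neg_mul_sq_div hc).const_mul √(π / c)).congr ?_
    filter_upwards [ae_restrict_mem measurableSet_Ioi] with r hr
    rw [← integral_cosh_mul_exp_neg_mul_sq_mul_cosh_sq c (one_pos.trans hr)]
    congr 1 with x
    exact (norm_of_nonneg (mul_nonneg (cosh_pos x).le (exp_pos _).le)).symm

theorem integral_gaussianTail_cosh (hc : 0 < c) :
    ∫ x, gaussianTail c (cosh x) = -(√(π / c) * eiNeg c) / 2 := calc
  ∫ x, gaussianTail c (cosh x)
  _ = ∫ x, ∫ r in Ioi (1 : ℝ), cosh x * exp (-(c * r ^ 2) * cosh x ^ 2) := by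
    simp only [gaussianTail_eq_integral_Ioi_one c (cosh_pos _)]
  _ = ∫ r in Ioi (1 : ℝ), ∫ x, cosh x * exp (-(c * r ^ 2) * cosh x ^ 2) :=
    integral_integral_swap (integrable_prod_cosh_mul_exp_neg_mul_cosh_sq hc)
  _ = ∫ r in Ioi (1 : ℝ), √(π / c) * (exp (-c * r ^ 2) / r) :=
    setIntegral_congr_fun measurableSet_Ioi fun _ hr =>
      integral_cosh_mul_exp_neg_mul_sq_mul_cosh_sq c (one_pos.trans hr)
  _ = -(√(π / c) * eiNeg c) / 2 := by
    rw [integral_const_mul, integral_Ioi_one_exp_neg_mul_sq_div hc]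
    ring

end HyperbolicGaussian

section OrbitalIntegral

theorem gaussianTestFn_neg_neg (x y : ℝ) : gaussianTestFn (-x) (-y) = -gaussianTestFn x y := by
  simp only [gaussianTestFn, neg_sq]
  ring

theorem gaussianTestFn_mul_exp_neg (p x : ℝ) :
    gaussianTestFn (p * exp (-x)) (-(p * exp x)) =
      -(p * exp (2 * π * p ^ 2)) * (sinh x * exp (-(4 * π * p ^ 2) * cosh x ^ 2)) := by
  have hexp : -(π * ((p * exp (-x)) ^ 2 + (-(p * exp x)) ^ 2)) =
      2 * π * p ^ 2 + -(4 * π * p ^ 2) * cosh x ^ 2 := by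
    rw [cosh_eq, exp_neg]
    field_simp
    ring
  rw [gaussianTestFn, hexp, exp_add, sinh_eq]
  ring

theorem archOrb_neg_neg (u₁ u₂ s : ℝ) : archOrb (-u₁) (-u₂) s = archOrb u₁ u₂ s := by
  simp only [archOrb, sign_neg, abs_neg, neg_mul, mul_neg, gaussianTestFn_neg_neg, integral_neg,
    neg_neg]

theorem archOrb_eq_integral_Ioi (u₁ u₂ s : ℝ) :
    archOrb u₁ u₂ s = 2 * (sign u₁ * |u₁| ^ (-s)) *
      ∫ t in Ioi 0, t ^ (s - 1) * gaussianTestFn (u₁ * t⁻¹) (t * u₂) := by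
  have hodd : Function.Odd fun t => gaussianTestFn (u₁ * t⁻¹) (t * u₂) * |t| ^ (s - 1) := by
    intro t
    simp only [inv_neg, mul_neg, neg_mul, gaussianTestFn_neg_neg, abs_neg]
  rw [archOrb, integral_compl_singleton_zero_mul_sign_of_odd hodd, mul_left_comm, mul_assoc 2]
  congr 2
  refine setIntegral_congr_fun measurableSet_Ioi fun t ht => ?_
  simp only [abs_of_pos (mem_Ioi.1 ht), mul_comm]

variable {u₁ u₂ p : ℝ}

theorem archOrb_eq_integral_exp_mul_sinh_of_pos (hu₁ : 0 < u₁) (hp : 0 < p)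
    (hu : u₁ * u₂ = -p ^ 2) (s : ℝ) :
    archOrb u₁ u₂ s = -(2 * p * exp (2 * π * p ^ 2)) * p ^ (-s) *
      ∫ x, exp (s * x) * (sinh x * exp (-(4 * π * p ^ 2) * cosh x ^ 2)) := by
  have hfst (x : ℝ) : u₁ * (u₁ / p * exp x)⁻¹ = p * exp (-x) := by
    rw [exp_neg]
    field_simp
  have hsnd (x : ℝ) : u₁ / p * exp x * u₂ = -(p * exp x) := by
    rw [div_mul_eq_mul_div, div_mul_eq_mul_div, div_eq_iff hp.ne']
    linear_combination exp x * hu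
  have hpow : u₁ ^ (-s) * (u₁ / p) ^ s = p ^ (-s) := by
    rw [div_rpow hu₁.le hp.le, rpow_neg hu₁.le, rpow_neg hp.le]
    field_simp
  have hsubst := integral_Ioi_zero_rpow_sub_one_smul
    (fun t => gaussianTestFn (u₁ * t⁻¹) (t * u₂)) s (div_pos hu₁ hp)
  simp only [smul_eq_mul, hfst, hsnd, gaussianTestFn_mul_exp_neg,
    mul_left_comm (exp (s * _)) (-(p * _)), integral_const_mul] at hsubst
  rw [archOrb_eq_integral_Ioi, sign_of_pos hu₁, abs_of_pos hu₁, hsubst, ← hpow]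
  ring

theorem archOrb_eq_mul_integral_gaussianTail (hp : 0 < p) (hu : u₁ * u₂ = -p ^ 2) (s : ℝ) :
    archOrb u₁ u₂ s = s * (-(2 * p * exp (2 * π * p ^ 2)) * p ^ (-s) *
      ∫ x, exp (s * x) * gaussianTail (4 * π * p ^ 2) (cosh x)) := by
  wlog hu₁ : 0 < u₁ generalizing u₁ u₂
  · have hne : u₁ ≠ 0 := by
      rintro rfl
      exact hp.ne' (by simpa using hu.symm)
    rw [← archOrb_neg_neg]
    exact this (by rwa [neg_mul_neg]) (neg_pos.2 (lt_of_le_of_ne (not_lt.1 hu₁) hne))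
  rw [archOrb_eq_integral_exp_mul_sinh_of_pos hu₁ hp hu,
    integral_exp_mul_mul_sinh_mul_exp_neg_mul_cosh_sq (by positivity)]
  ring

theorem hasDerivAt_archOrb_zero (hp : 0 < p) (hu : u₁ * u₂ = -p ^ 2) :
    HasDerivAt (archOrb u₁ u₂)
      (-(2 * p * exp (2 * π * p ^ 2)) * ∫ x, gaussianTail (4 * π * p ^ 2) (cosh x)) 0 := by
  have hlaplace : Continuous fun s =>
      ∫ x, exp (s * x) * gaussianTail (4 * π * p ^ 2) (cosh x) :=
    continuous_integral_exp_mul_smul fun s =>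
      integrable_exp_mul_mul_gaussianTail_cosh (by positivity) s
  have hcofactor : Continuous fun s => -(2 * p * exp (2 * π * p ^ 2)) * p ^ (-s) *
      ∫ x, exp (s * x) * gaussianTail (4 * π * p ^ 2) (cosh x) := by
    fun_prop (disch := positivity)
  have h := hasDerivAt_sub_smul_of_continuousAt (hcofactor.continuousAt (x := 0))
  simp only [sub_zero, smul_eq_mul, ← archOrb_eq_mul_integral_gaussianTail hp hu, neg_zero,
    rpow_zero, mul_one, zero_mul, exp_zero, one_mul] at h
  exact h

end OrbitalIntegral

/-- For `ζ < 0`, the archimedean orbital integral is differentiable at `s = 0`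
with derivative `∂Orb(ζ, φ') = (1/2)·e^{-2πζ}·Ei(-4π|ζ|)`. -/
theorem stmt5 (ζ u₁ u₂ : ℝ) (hu₁ : u₁ ≠ 0) (hu₂ : u₂ ≠ 0) (hu : u₁ * u₂ = ζ)
    (hζ : ζ < 0) :
    HasDerivAt (fun s : ℝ => archOrb u₁ u₂ s)
      ((1 / 2) * Real.exp (-(2 * Real.pi * ζ)) * eiNeg (4 * Real.pi * |ζ|)) 0 := by
  obtain ⟨p, hp, rfl⟩ : ∃ p > 0, ζ = -p ^ 2 :=
    ⟨√(-ζ), sqrt_pos.2 (neg_pos.2 hζ), by rw [sq_sqrt (neg_pos.2 hζ).le, neg_neg]⟩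
  have hsqrt : √(π / (4 * π * p ^ 2)) = 1 / (2 * p) := by
    rw [show π / (4 * π * p ^ 2) = (1 / (2 * p)) ^ 2 by field_simp; norm_num,
      sqrt_sq (by positivity)]
  refine (hasDerivAt_archOrb_zero hp hu).congr_deriv ?_
  rw [integral_gaussianTail_cosh (by positivity), hsqrt, abs_neg, abs_of_nonneg (sq_nonneg p)]
  field_simp
end
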